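/- arXiv:1703.05057 — 2 statements merged into one kernel-verified Lean document; each statement's English description precedes it below -/
import Mathlib

section
/- If a stepset polynomial has the (1,2)-Hadamard form P(x,y,z) = U(x) + V(x)·T(y,z) with V ≠ 0 and T having nonzero coefficients at y^{-1}-terms and y-terms (so that the group maps are defined), then the birational involutions φ_x, φ_y, φ_z associated to P satisfy φ_x∘φ_y = φ_y∘φ_x and φ_x∘φ_z = φ_z∘φ_x. -/
open MvPolynomial

noncomputable section

/-- The field `ℚ(x,y,z)` of rational functions in three variables. -/
abbrev Fld : Type := FractionRing (MvPolynomial (Fin 3) ℚ)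

/-- The variables `x = Xv 0`, `y = Xv 1`, `z = Xv 2` of `ℚ(x,y,z)`. -/
def Xv (i : Fin 3) : Fld := algebraMap (MvPolynomial (Fin 3) ℚ) Fld (X i)

/-- The value at `(a,b)` of the bivariate Laurent polynomial `p/(s^m t^n)`. -/
def lv (p : MvPolynomial (Fin 2) ℚ) (m n : ℕ) (a b : Fld) : Fld :=
  aeval ![a, b] p / (a ^ m * b ^ n)

/-- The value at `a` of the univariate Laurent polynomial `p/s^m`. -/
def lv1 (p : Polynomial ℚ) (m : ℕ) (a : Fld) : Fld :=
  Polynomial.aeval a p / a ^ m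

/-- The value at `(a,b)` of the ratio of two bivariate Laurent polynomials. -/
def lratio (p : MvPolynomial (Fin 2) ℚ) (mp np : ℕ) (q : MvPolynomial (Fin 2) ℚ)
    (mq nq : ℕ) (a b : Fld) : Fld :=
  lv p mp np a b / lv q mq nq a b

/-- Functions given by Laurent polynomials in three variables. -/
def Good (f : (Fin 3 → Fld) → Fld) : Prop :=
  ∃ (N : MvPolynomial (Fin 3) ℚ) (k : ℕ), ∀ v : Fin 3 → Fld, (∀ i, v i ≠ 0) →
    f v * (v 0 * v 1 * v 2) ^ k = aeval v N

theorem Good.add {f g : (Fin 3 → Fld) → Fld} (hf : Good f) (hg : Good g) :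
    Good (fun v => f v + g v) := by
  obtain ⟨N, k, h⟩ := hf
  obtain ⟨M, l, h'⟩ := hg
  refine ⟨N * (X 0 * X 1 * X 2) ^ l + M * (X 0 * X 1 * X 2) ^ k, k + l, fun v hv => ?_⟩
  simp only [map_add, map_mul, map_pow, aeval_X, ← h v hv, ← h' v hv]
  ring

theorem Good.mul {f g : (Fin 3 → Fld) → Fld} (hf : Good f) (hg : Good g) :
    Good (fun v => f v * g v) := by
  obtain ⟨N, k, h⟩ := hf
  obtain ⟨M, l, h'⟩ := hg
  refine ⟨N * M, k + l, fun v hv => ?_⟩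
  simp only [map_mul, ← h v hv, ← h' v hv]
  ring

theorem Good.neg {f : (Fin 3 → Fld) → Fld} (hf : Good f) :
    Good (fun v => - f v) := by
  obtain ⟨N, k, h⟩ := hf
  refine ⟨-N, k, fun v hv => ?_⟩
  simp only [map_neg, ← h v hv]
  ring

theorem Good.pow {f : (Fin 3 → Fld) → Fld} (hf : Good f) (n : ℕ) :
    Good (fun v => f v ^ n) := by
  obtain ⟨N, k, h⟩ := hf
  refine ⟨N ^ n, k * n, fun v hv => ?_⟩
  simp only [map_pow, ← h v hv]
  ring

theorem good_coord (i : Fin 3) : Good (fun v => v i) :=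
  ⟨X i, 0, fun v _ => by simp⟩

theorem good_inv (i : Fin 3) : Good (fun v => (v i)⁻¹) := by
  have h0 : Good (fun v => (v 0)⁻¹) := by
    refine ⟨X 1 * X 2, 1, fun v hv => ?_⟩
    rw [map_mul, aeval_X, aeval_X, pow_one, mul_assoc, inv_mul_cancel_left₀ (hv 0)]
  have h1 : Good (fun v => (v 1)⁻¹) := by
    refine ⟨X 0 * X 2, 1, fun v hv => ?_⟩
    rw [map_mul, aeval_X, aeval_X, pow_one, mul_comm (v 0), mul_assoc,
      inv_mul_cancel_left₀ (hv 1)]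
  have h2 : Good (fun v => (v 2)⁻¹) := by
    refine ⟨X 0 * X 1, 1, fun v hv => ?_⟩
    rw [map_mul, aeval_X, aeval_X, pow_one, mul_comm _ (v 2), inv_mul_cancel_left₀ (hv 2)]
  match i with
  | 0 => exact h0
  | 1 => exact h1
  | 2 => exact h2

theorem good_lv (p : MvPolynomial (Fin 2) ℚ) (m n : ℕ) (i j : Fin 3) :
    Good (fun v => lv p m n (v i) (v j)) := by
  have h1 : Good (fun v => aeval ![v i, v j] p) := by
    refine ⟨rename ![i, j] p, 0, fun v _ => ?_⟩
    have hc : v ∘ ![i, j] = ![v i, v j] := by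
      funext t
      fin_cases t <;> rfl
    rw [aeval_rename, pow_zero, mul_one, hc]
  have h2 := h1.mul (((good_inv i).pow m).mul ((good_inv j).pow n))
  convert h2 using 2 with v
  simp [lv, div_eq_mul_inv, mul_comm]

theorem good_lv1 (p : Polynomial ℚ) (m : ℕ) (i : Fin 3) :
    Good (fun v => lv1 p m (v i)) := by
  have h1 : Good (fun v => Polynomial.aeval (v i) p) := by
    refine ⟨Polynomial.aeval (X i) p, 0, fun v _ => ?_⟩
    rw [← Polynomial.aeval_algHom_apply, aeval_X, pow_zero, mul_one]
  have h2 := h1.mul ((good_inv i).pow m)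
  convert h2 using 2 with v
  simp [lv1, div_eq_mul_inv]

theorem Xv_ne (i : Fin 3) : Xv i ≠ 0 := by
  unfold Xv
  rw [Ne, FaithfulSMul.algebraMap_eq_zero_iff]
  exact X_ne_zero i

theorem aeval_Xv (N : MvPolynomial (Fin 3) ℚ) :
    aeval Xv N = algebraMap (MvPolynomial (Fin 3) ℚ) Fld N := by
  have : (aeval Xv : MvPolynomial (Fin 3) ℚ →ₐ[ℚ] Fld) =
      IsScalarTower.toAlgHom ℚ (MvPolynomial (Fin 3) ℚ) Fld := by
    ext i
    simp [Xv]
  rw [this]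
  rfl

theorem good_transfer {f g : (Fin 3 → Fld) → Fld} (hf : Good f) (hg : Good g)
    (h : f Xv = g Xv) (v : Fin 3 → Fld) (hv : ∀ i, v i ≠ 0) : f v = g v := by
  obtain ⟨N, k, hN⟩ := hf.add hg.neg
  have h0 := hN Xv Xv_ne
  beta_reduce at h0
  rw [h, add_neg_cancel, zero_mul, aeval_Xv] at h0
  have hN0 : N = 0 := (FaithfulSMul.algebraMap_eq_zero_iff _ Fld).1 h0.symm
  have h1 := hN v hv
  rw [hN0, map_zero] at h1
  have h2 : (v 0 * v 1 * v 2) ^ k ≠ 0 :=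
    pow_ne_zero _ (mul_ne_zero (mul_ne_zero (hv 0) (hv 1)) (hv 2))
  have h3 := (mul_eq_zero.1 h1).resolve_right h2
  linear_combination h3

/-- Scaling the first variable. -/
theorem exists_scale : ∃ σ : Fld →ₐ[ℚ] Fld,
    σ (Xv 0) = 2 * Xv 0 ∧ σ (Xv 1) = Xv 1 ∧ σ (Xv 2) = Xv 2 := by
  let s : MvPolynomial (Fin 3) ℚ →ₐ[ℚ] MvPolynomial (Fin 3) ℚ :=
    aeval ![C 2 * X 0, X 1, X 2]
  let t : MvPolynomial (Fin 3) ℚ →ₐ[ℚ] MvPolynomial (Fin 3) ℚ :=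
    aeval ![C (1/2) * X 0, X 1, X 2]
  have hts : t.comp s = AlgHom.id ℚ _ := by
    ext i : 1
    fin_cases i
    · simp only [s, t, AlgHom.comp_apply]
      simp
      rw [← mul_assoc, ← C_mul]
      norm_num
    · simp [s, t]
    · simp [s, t]
  have hs : Function.Injective s := by
    intro a b hab
    have h1 := DFunLike.congr_fun hts a
    have h2 := DFunLike.congr_fun hts b
    simp only [AlgHom.comp_apply, AlgHom.id_apply] at h1 h2
    rw [← h1, ← h2, hab]
  let g : MvPolynomial (Fin 3) ℚ →ₐ[ℚ] Fld :=
    (IsScalarTower.toAlgHom ℚ (MvPolynomial (Fin 3) ℚ) Fld).comp s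
  have hg : Function.Injective g := by
    intro a b hab
    exact hs (IsFractionRing.injective (MvPolynomial (Fin 3) ℚ) Fld hab)
  refine ⟨IsFractionRing.liftAlgHom hg, ?_, ?_, ?_⟩
  · simp only [Xv, IsFractionRing.liftAlgHom_apply, IsFractionRing.lift_algebraMap]
    simp [g, s]
    rw [show (C 2 : MvPolynomial (Fin 3) ℚ) = 2 from map_ofNat C 2, map_ofNat]
  · simp only [Xv, IsFractionRing.liftAlgHom_apply, IsFractionRing.lift_algebraMap]
    simp [g, s]
  · simp only [Xv, IsFractionRing.liftAlgHom_apply, IsFractionRing.lift_algebraMap]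
    simp [g, s]

theorem map_lv (σ : Fld →ₐ[ℚ] Fld) (p : MvPolynomial (Fin 2) ℚ) (m n : ℕ) (a b : Fld) :
    σ (lv p m n a b) = lv p m n (σ a) (σ b) := by
  simp only [lv, map_div₀, map_mul, map_pow]
  congr 1
  have : σ.comp (aeval ![a, b]) = aeval ![σ a, σ b] := by
    ext i
    fin_cases i <;> simp
  rw [← this]
  rfl

theorem lv1_ne {R : Fld} (V : Polynomial ℚ) (m : ℕ) (hV : V ≠ 0) (hR : R ≠ 0)
    (σ : Fld →ₐ[ℚ] Fld) (h0 : σ (Xv 0) = 2 * Xv 0) (h : σ R = R) :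
    lv1 V m ((Xv 0)⁻¹ * R) ≠ 0 := by
  have hw : (Xv 0)⁻¹ * R ≠ 0 := mul_ne_zero (inv_ne_zero (Xv_ne 0)) hR
  have hσ : σ ((Xv 0)⁻¹ * R) = 2⁻¹ * ((Xv 0)⁻¹ * R) := by
    rw [map_mul, map_inv₀, h0, h]
    field_simp
  generalize (Xv 0)⁻¹ * R = w at hw hσ
  intro hz
  have hz' : Polynomial.aeval w V = 0 := by
    rcases div_eq_zero_iff.1 hz with h | h
    · exact h
    · exact absurd h (pow_ne_zero _ hw)
  have key : ∀ n : ℕ, Polynomial.aeval ((2⁻¹ : Fld) ^ n * w) V = 0 := by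
    intro n
    induction n with
    | zero => simpa using hz'
    | succ n ih =>
      have := congrArg σ ih
      rw [← Polynomial.aeval_algHom_apply, map_mul, map_pow, map_inv₀, hσ, map_zero,
        map_ofNat] at this
      rw [← this, pow_succ, mul_assoc]
  have hinj : Function.Injective (fun n : ℕ => (2⁻¹ : Fld) ^ n * w) := by
    intro a b hab
    have h1 := mul_right_cancel₀ hw hab
    simp only [inv_pow, inv_inj] at h1
    have h2 : (2 ^ a : ℕ) = 2 ^ b := by exact_mod_cast h1
    exact Nat.pow_right_injective le_rfl h2
  have hfin : (V.rootSet Fld).Finite := Polynomial.rootSet_finite V Fld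
  refine Set.infinite_of_injective_forall_mem hinj (fun n => ?_) hfin
  rw [Polynomial.mem_rootSet]
  exact ⟨hV, key n⟩

/-- Solving for the extreme coefficients. -/
theorem extract {m o p f1 f2 f3 : Fld} (h1 : f1 = (1 : Fld)⁻¹ * m + o + 1 * p)
    (h2 : f2 = (-1 : Fld)⁻¹ * m + o + (-1) * p)
    (h3 : f3 = (2 : Fld)⁻¹ * m + o + 2 * p) :
    m = f1 + (-1/3) * f2 + (-2/3) * f3 ∧ p = -f1/2 + (-1/6) * f2 + (2/3) * f3 := by
  subst h1 h2 h3
  constructor <;> · field_simp; ring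

theorem reflect {y m o p : Fld} (hy : y ≠ 0) (hm : m ≠ 0) (hp : p ≠ 0) :
    (y⁻¹ * (m / p))⁻¹ * m + o + (y⁻¹ * (m / p)) * p = y⁻¹ * m + o + y * p := by
  field_simp
  ring

/-- If a stepset polynomial `P(x,y,z) = x⁻¹A₋(y,z) + A₀(y,z) + xA₊(y,z)
= y⁻¹B₋(x,z) + B₀(x,z) + yB₊(x,z) = z⁻¹C₋(x,y) + C₀(x,y) + zC₊(x,y)` (all coefficient
Laurent polynomials `A₋,A₊,B₋,B₊,C₋,C₊` nonzero, so that the group maps are defined)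
has the (1,2)-Hadamard form `P = U(x) + V(x)·T(y,z)` with `V ≠ 0`, then
`φ_x∘φ_y = φ_y∘φ_x` and `φ_x∘φ_z = φ_z∘φ_x`; since `φ_x` only changes `x`, `φ_y` only `y`
and `φ_z` only `z`, commutation is expressed by the invariance of `A₋/A₊` under
`y ↦ (1/y)·B₋/B₊` and `z ↦ (1/z)·C₋/C₊`, of `B₋/B₊` under `x ↦ (1/x)·A₋/A₊`, and of
`C₋/C₊` under `x ↦ (1/x)·A₋/A₊`. -/
theorem stmt1
    (aM aP a0 bM bP b0 cM cP c0 : MvPolynomial (Fin 2) ℚ)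
    (aMy aMz aPy aPz a0y a0z bMx bMz bPx bPz b0x b0z cMx cMy cPx cPy c0x c0y : ℕ)
    (U V : Polynomial ℚ) (mU mV : ℕ) (T : MvPolynomial (Fin 2) ℚ) (mT nT : ℕ)
    (P : Fld)
    (hA : P = (Xv 0)⁻¹ * lv aM aMy aMz (Xv 1) (Xv 2) + lv a0 a0y a0z (Xv 1) (Xv 2)
            + Xv 0 * lv aP aPy aPz (Xv 1) (Xv 2))
    (hB : P = (Xv 1)⁻¹ * lv bM bMx bMz (Xv 0) (Xv 2) + lv b0 b0x b0z (Xv 0) (Xv 2)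
            + Xv 1 * lv bP bPx bPz (Xv 0) (Xv 2))
    (hC : P = (Xv 2)⁻¹ * lv cM cMx cMy (Xv 0) (Xv 1) + lv c0 c0x c0y (Xv 0) (Xv 1)
            + Xv 2 * lv cP cPx cPy (Xv 0) (Xv 1))
    (hAM : lv aM aMy aMz (Xv 1) (Xv 2) ≠ 0) (hAP : lv aP aPy aPz (Xv 1) (Xv 2) ≠ 0)
    (hBM : lv bM bMx bMz (Xv 0) (Xv 2) ≠ 0) (hBP : lv bP bPx bPz (Xv 0) (Xv 2) ≠ 0)
    (hCM : lv cM cMx cMy (Xv 0) (Xv 1) ≠ 0) (hCP : lv cP cPx cPy (Xv 0) (Xv 1) ≠ 0)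
    (hHad : P = lv1 U mU (Xv 0) + lv1 V mV (Xv 0) * lv T mT nT (Xv 1) (Xv 2))
    (hV : lv1 V mV (Xv 0) ≠ 0) :
    (lratio aM aMy aMz aP aPy aPz (Xv 1) (Xv 2) =
      lratio aM aMy aMz aP aPy aPz
        ((Xv 1)⁻¹ * lratio bM bMx bMz bP bPx bPz (Xv 0) (Xv 2)) (Xv 2)) ∧
    (lratio bM bMx bMz bP bPx bPz (Xv 0) (Xv 2) =
      lratio bM bMx bMz bP bPx bPz
        ((Xv 0)⁻¹ * lratio aM aMy aMz aP aPy aPz (Xv 1) (Xv 2)) (Xv 2)) ∧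
    (lratio aM aMy aMz aP aPy aPz (Xv 1) (Xv 2) =
      lratio aM aMy aMz aP aPy aPz (Xv 1)
        ((Xv 2)⁻¹ * lratio cM cMx cMy cP cPx cPy (Xv 0) (Xv 1))) ∧
    (lratio cM cMx cMy cP cPx cPy (Xv 0) (Xv 1) =
      lratio cM cMx cMy cP cPx cPy
        ((Xv 0)⁻¹ * lratio aM aMy aMz aP aPy aPz (Xv 1) (Xv 2)) (Xv 1)) := by
  have hx := Xv_ne 0
  have hy := Xv_ne 1
  have hz := Xv_ne 2
  have h1' : (1 : Fld) ≠ 0 := one_ne_zero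
  have hm1' : (-1 : Fld) ≠ 0 := neg_ne_zero.2 one_ne_zero
  have h2' : (2 : Fld) ≠ 0 := two_ne_zero
  have gH := (good_lv1 U mU 0).add ((good_lv1 V mV 0).mul (good_lv T mT nT 1 2))
  have gA := (((good_inv 0).mul (good_lv aM aMy aMz 1 2)).add (good_lv a0 a0y a0z 1 2)).add
    ((good_coord 0).mul (good_lv aP aPy aPz 1 2))
  have gB := (((good_inv 1).mul (good_lv bM bMx bMz 0 2)).add (good_lv b0 b0x b0z 0 2)).add
    ((good_coord 1).mul (good_lv bP bPx bPz 0 2))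
  have gC := (((good_inv 2).mul (good_lv cM cMx cMy 0 1)).add (good_lv c0 c0x c0y 0 1)).add
    ((good_coord 2).mul (good_lv cP cPx cPy 0 1))
  have hv : ∀ a b c : Fld, a ≠ 0 → b ≠ 0 → c ≠ 0 → ∀ i, (![a, b, c] : Fin 3 → Fld) i ≠ 0 := by
    intro a b c ha hb hc i
    fin_cases i
    · exact ha
    · exact hb
    · exact hc
  have tA : ∀ a b c : Fld, a ≠ 0 → b ≠ 0 → c ≠ 0 →
      lv1 U mU a + lv1 V mV a * lv T mT nT b c =
        a⁻¹ * lv aM aMy aMz b c + lv a0 a0y a0z b c + a * lv aP aPy aPz b c :=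
    fun a b c ha hb hc =>
      good_transfer gH gA (hHad.symm.trans hA) ![a, b, c] (hv a b c ha hb hc)
  have tB : ∀ a b c : Fld, a ≠ 0 → b ≠ 0 → c ≠ 0 →
      lv1 U mU a + lv1 V mV a * lv T mT nT b c =
        b⁻¹ * lv bM bMx bMz a c + lv b0 b0x b0z a c + b * lv bP bPx bPz a c :=
    fun a b c ha hb hc =>
      good_transfer gH gB (hHad.symm.trans hB) ![a, b, c] (hv a b c ha hb hc)
  have tC : ∀ a b c : Fld, a ≠ 0 → b ≠ 0 → c ≠ 0 →
      lv1 U mU a + lv1 V mV a * lv T mT nT b c =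
        c⁻¹ * lv cM cMx cMy a b + lv c0 c0x c0y a b + c * lv cP cPx cPy a b :=
    fun a b c ha hb hc =>
      good_transfer gH gC (hHad.symm.trans hC) ![a, b, c] (hv a b c ha hb hc)
  have keyA : ∀ b c b' c' : Fld, b ≠ 0 → c ≠ 0 → b' ≠ 0 → c' ≠ 0 →
      lv T mT nT b' c' = lv T mT nT b c →
      lratio aM aMy aMz aP aPy aPz b c = lratio aM aMy aMz aP aPy aPz b' c' := by
    intro b c b' c' hb hc hb' hc' hT
    have e := extract (tA 1 b c h1' hb hc) (tA (-1) b c hm1' hb hc) (tA 2 b c h2' hb hc)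
    have e' := extract (tA 1 b' c' h1' hb' hc') (tA (-1) b' c' hm1' hb' hc')
      (tA 2 b' c' h2' hb' hc')
    unfold lratio
    rw [e.1, e.2, e'.1, e'.2, hT]
  have hAr : lratio aM aMy aMz aP aPy aPz (Xv 1) (Xv 2) ≠ 0 := div_ne_zero hAM hAP
  have hBr : lratio bM bMx bMz bP bPx bPz (Xv 0) (Xv 2) ≠ 0 := div_ne_zero hBM hBP
  have hCr : lratio cM cMx cMy cP cPx cPy (Xv 0) (Xv 1) ≠ 0 := div_ne_zero hCM hCP
  have hx' := mul_ne_zero (inv_ne_zero hx) hAr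
  have hy' := mul_ne_zero (inv_ne_zero hy) hBr
  have hz' := mul_ne_zero (inv_ne_zero hz) hCr
  have hV0 : V ≠ 0 := by
    rintro rfl
    exact hV (by simp [lv1])
  have hVx' : lv1 V mV ((Xv 0)⁻¹ * lratio aM aMy aMz aP aPy aPz (Xv 1) (Xv 2)) ≠ 0 := by
    obtain ⟨σ, s0, s1, s2⟩ := exists_scale
    refine lv1_ne V mV hV0 hAr σ s0 ?_
    simp only [lratio, map_div₀, map_lv, s1, s2]
  refine ⟨?_, ?_, ?_, ?_⟩
  · refine keyA _ _ _ _ hy hz hy' hz ?_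
    have e1 := tB _ _ _ hx hy hz
    have e2 := tB _ _ _ hx hy' hz
    have e3 := reflect (o := lv b0 b0x b0z (Xv 0) (Xv 2)) hy hBM hBP
    have e4 := e2.trans (e3.trans e1.symm)
    exact mul_left_cancel₀ hV (add_left_cancel e4)
  · have key : ∀ a : Fld, a ≠ 0 → lv1 V mV a ≠ 0 →
        lratio bM bMx bMz bP bPx bPz a (Xv 2) =
        (lv T mT nT 1 (Xv 2) + (-1/3) * lv T mT nT (-1) (Xv 2)
          + (-2/3) * lv T mT nT 2 (Xv 2)) /
        (-lv T mT nT 1 (Xv 2) / 2 + (-1/6) * lv T mT nT (-1) (Xv 2)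
          + (2/3) * lv T mT nT 2 (Xv 2)) := by
      intro a ha hVa
      have e := extract (tB a 1 _ ha h1' hz) (tB a (-1) _ ha hm1' hz) (tB a 2 _ ha h2' hz)
      unfold lratio
      rw [e.1, e.2]
      refine Eq.trans ?_ (mul_div_mul_left _ _ hVa)
      congr 1 <;> ring
    rw [key _ hx hV, key _ hx' hVx']
  · refine keyA _ _ _ _ hy hz hy hz' ?_
    have e1 := tC _ _ _ hx hy hz
    have e2 := tC _ _ _ hx hy hz'
    have e3 := reflect (o := lv c0 c0x c0y (Xv 0) (Xv 1)) hz hCM hCP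
    have e4 := e2.trans (e3.trans e1.symm)
    exact mul_left_cancel₀ hV (add_left_cancel e4)
  · have key : ∀ a : Fld, a ≠ 0 → lv1 V mV a ≠ 0 →
        lratio cM cMx cMy cP cPx cPy a (Xv 1) =
        (lv T mT nT (Xv 1) 1 + (-1/3) * lv T mT nT (Xv 1) (-1)
          + (-2/3) * lv T mT nT (Xv 1) 2) /
        (-lv T mT nT (Xv 1) 1 / 2 + (-1/6) * lv T mT nT (Xv 1) (-1)
          + (2/3) * lv T mT nT (Xv 1) 2) := by
      intro a ha hVa
      have e := extract (tC a _ 1 ha hy h1') (tC a _ (-1) ha hy hm1') (tC a _ 2 ha hy h2')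
      unfold lratio
      rw [e.1, e.2]
      refine Eq.trans ?_ (mul_div_mul_left _ _ hVa)
      congr 1 <;> ring
    rw [key _ hx hV, key _ hx' hVx']
end
end

section
/- Let P(x,y,z) be a Laurent polynomial with A_±, B_±, C_± all nonzero whose associated involutions satisfy φ_xφ_y = φ_yφ_x and φ_xφ_z = φ_zφ_x, and suppose none of A_- /A_+, B_- /B_+, C_- /C_+ is constant. Then ∂/∂x (B_-(x,z)/B_+(x,z)) = 0 and ∂/∂x (C_-(x,y)/C_+(x,y)) = 0, i.e., both ratios are independent of x. -/
open MvPolynomial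

noncomputable section

/-- Derivations of a field over the rationals. -/
abbrev Der (K : Type) [Field K] [Algebra ℚ K] := Derivation ℚ K K

lemma aux_totalDegree {σ : Type*} (i : σ) (p : MvPolynomial σ ℚ) (h : pderiv i p ≠ 0) :
    (pderiv i p).totalDegree < p.totalDegree := by
  have key : ∀ m ∈ (pderiv i p).support, (m.sum fun _ e => e) + 1 ≤ p.totalDegree := by
    intro m hm
    rw [mem_support_iff, coeff_pderiv] at hm
    have h1 : m + Finsupp.single i 1 ∈ p.support := by
      rw [mem_support_iff]; exact left_ne_zero_of_mul hm
    have h2 := le_totalDegree h1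
    rw [Finsupp.sum_add_index' (by simp) (by simp)] at h2
    simpa using h2
  obtain ⟨m, hm⟩ := support_nonempty.2 h
  have hpos : 0 < p.totalDegree := by have := key m hm; omega
  rw [totalDegree, Finset.sup_lt_iff (by simpa using hpos)]
  intro m hm
  have := key m hm
  omega

lemma aux_const {σ : Type*} (p : MvPolynomial σ ℚ) (h : ∀ i, pderiv i p = 0) :
    p = C (coeff 0 p) := by
  classical
  ext m
  rw [coeff_C]
  split_ifs with hm
  · rw [hm]
  · obtain ⟨i, hi⟩ : ∃ i, m i ≠ 0 := by
      by_contra hcon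
      push Not at hcon
      exact hm (Finsupp.ext fun i => by simp [hcon i])
    have h1 := coeff_pderiv (i := i) p (m - Finsupp.single i 1)
    rw [h i, coeff_zero, tsub_add_cancel_of_le (by
      rw [Finsupp.single_le_iff]; omega)] at h1
    rcases mul_eq_zero.1 h1.symm with h2 | h2
    · exact h2
    · exfalso
      have h3 : (0 : ℚ) ≤ (((m - Finsupp.single i 1 : σ →₀ ℕ) i : ℕ) : ℚ) := Nat.cast_nonneg _
      linarith

lemma aux_chain {σ : Type*} [Fintype σ] {K : Type*} [Field K] [Algebra ℚ K]
    (d : Derivation ℚ K K) (f : σ → K) (p : MvPolynomial σ ℚ) :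
    d (aeval f p) = ∑ j, aeval f (pderiv j p) * d (f j) := by
  classical
  induction p using MvPolynomial.induction_on with
  | C a => simp only [aeval_C, Derivation.map_algebraMap, pderiv_C, map_zero, zero_mul,
      Finset.sum_const_zero]
  | add p q hp hq => simp only [map_add, hp, hq, add_mul, Finset.sum_add_distrib]
  | mul_X p i hp =>
    simp only [map_mul, aeval_X, Derivation.leibniz, hp, smul_eq_mul, map_add, pderiv_X, add_mul,
      Finset.sum_add_distrib, Finset.mul_sum]
    congr 1
    · rw [Finset.sum_eq_single i]
      · simp
      · intro j _ hj
        simp [hj.symm]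
      · simp
    · exact Finset.sum_congr rfl fun j _ => by ring

lemma aux_chain2 {K : Type*} [Field K] [Algebra ℚ K]
    (d : Derivation ℚ K K) (u v : K) (p : MvPolynomial (Fin 2) ℚ) :
    d (aeval ![u, v] p) = aeval ![u, v] (pderiv 0 p) * d u + aeval ![u, v] (pderiv 1 p) * d v := by
  rw [aux_chain, Fin.sum_univ_two]; simp

/-- Algebraic independence from a triangular Jacobian. -/
lemma aux_indep {K : Type*} [Field K] [Algebra ℚ K] (d e : Derivation ℚ K K) (u v : K)
    (hdu : d u ≠ 0) (hdv : d v = 0) (hev : e v ≠ 0) :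
    ∀ (n : ℕ) (p : MvPolynomial (Fin 2) ℚ), p.totalDegree ≤ n → aeval ![u, v] p = 0 → p = 0 := by
  intro n
  induction n using Nat.strong_induction_on with
  | _ n ih =>
  intro p hpn hp
  have step : ∀ i, aeval ![u, v] (pderiv i p) = 0 → pderiv i p = 0 := by
    intro i hi
    by_contra hne
    have := aux_totalDegree i p hne
    exact hne (ih _ (by omega) _ le_rfl hi)
  have h0 : pderiv 0 p = 0 := by
    apply step
    have := aux_chain2 d u v p
    rw [hp, hdv, map_zero, mul_zero, add_zero] at this
    exact (mul_eq_zero.1 this.symm).resolve_right hdu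
  have h1 : pderiv 1 p = 0 := by
    apply step
    have := aux_chain2 e u v p
    rw [hp, h0, map_zero, map_zero, zero_mul, zero_add] at this
    exact (mul_eq_zero.1 this.symm).resolve_right hev
  have hc := aux_const p (by intro i; fin_cases i <;> assumption)
  rw [hc] at hp ⊢
  rw [aeval_C] at hp
  rw [(map_eq_zero (algebraMap ℚ K)).1 hp, C_0]

lemma aux_indep' {K : Type*} [Field K] [Algebra ℚ K] (d e : Derivation ℚ K K) (u v : K)
    (hev : e v ≠ 0) (heu : e u = 0) (hdu : d u ≠ 0) (p : MvPolynomial (Fin 2) ℚ)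
    (hp : aeval ![u, v] p = 0) : p = 0 := by
  have h := aux_indep e d v u hev heu hdu _ (rename (Equiv.swap (0 : Fin 2) 1) p) le_rfl (by
    rw [aeval_rename, ← hp]
    congr 2
    funext i
    fin_cases i <;> simp)
  exact (rename_injective _ (Equiv.injective _)) (h.trans (map_zero _).symm)

lemma aux_deriv {K : Type} [Field K] [Algebra ℚ K] [Algebra (MvPolynomial (Fin 3) ℚ) K]
    [IsFractionRing (MvPolynomial (Fin 3) ℚ) K] [IsScalarTower ℚ (MvPolynomial (Fin 3) ℚ) K]
    (x : Fin 3 → K) (hx : ∀ i, x i = algebraMap (MvPolynomial (Fin 3) ℚ) K (X i)) (i : Fin 3) : ∃ d : Der K,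
    ∀ j, d (x j) = if j = i then 1 else 0 := by
  let f : MvPolynomial (Fin 3) ℚ →ₐ[ℚ] TrivSqZeroExt K K :=
    aeval (fun j => TrivSqZeroExt.inl (x j) + TrivSqZeroExt.inr (if j = i then (1 : K) else 0))
  have hf : ∀ p, (f p).fst = algebraMap _ K p := by
    intro p
    have : (TrivSqZeroExt.fstHom ℚ K K).comp f =
        Algebra.algHom ℚ (MvPolynomial (Fin 3) ℚ) K := by
      apply MvPolynomial.algHom_ext
      intro j
      change (f (X j)).fst = algebraMap _ K (X j)
      simp only [f, aeval_X, TrivSqZeroExt.fst_add, TrivSqZeroExt.fst_inl, TrivSqZeroExt.fst_inr,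
        add_zero, hx]
    exact DFunLike.congr_fun this p
  have hu : ∀ s : nonZeroDivisors (MvPolynomial (Fin 3) ℚ), IsUnit ((f : MvPolynomial (Fin 3) ℚ →+* TrivSqZeroExt K K) s) := by
    intro s
    rw [TrivSqZeroExt.isUnit_iff_isUnit_fst]
    change IsUnit (f s).fst
    rw [hf]
    exact IsLocalization.map_units K s
  let g : K →+* TrivSqZeroExt K K := 
    IsLocalization.lift (M := nonZeroDivisors (MvPolynomial (Fin 3) ℚ)) hu
  have hg : ∀ p, g (algebraMap _ _ p) = f p := fun p => IsLocalization.lift_eq hu p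
  have hg1 : ∀ a, (g a).fst = a := by
    intro a
    have : ((TrivSqZeroExt.fstHom ℚ K K).toRingHom.comp g) = RingHom.id K := by
      apply IsLocalization.ringHom_ext (nonZeroDivisors (MvPolynomial (Fin 3) ℚ))
      ext p
      · simp
      · change (g (algebraMap _ _ _)).fst = _
        rw [hg, hf]; rfl
    exact DFunLike.congr_fun this a
  let gl : K →ₗ[ℚ] K :=
    (TrivSqZeroExt.sndHom K K).restrictScalars ℚ ∘ₗ g.toRatAlgHom.toLinearMap
  have hgl : ∀ a, gl a = (g a).snd := fun a => rfl
  refine ⟨Derivation.mk' gl ?_, ?_⟩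
  · intro a b
    rw [hgl, hgl, hgl, map_mul, TrivSqZeroExt.snd_mul, hg1, hg1]
    simp [mul_comm]
  · intro j
    change gl _ = _
    rw [hgl, hx, hg]
    simp only [f, aeval_X, TrivSqZeroExt.snd_add, TrivSqZeroExt.snd_inl, TrivSqZeroExt.snd_inr,
      zero_add]

lemma aux_constK {K : Type} [Field K] [Algebra ℚ K] [Algebra (MvPolynomial (Fin 3) ℚ) K]
    [IsFractionRing (MvPolynomial (Fin 3) ℚ) K] [IsScalarTower ℚ (MvPolynomial (Fin 3) ℚ) K]
    (x : Fin 3 → K) (hx : ∀ i, x i = algebraMap (MvPolynomial (Fin 3) ℚ) K (X i)) (d : Fin 3 → Der K)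
    (hd : ∀ i j, d i (x j) = if j = i then 1 else 0) (a : K) (ha : ∀ i, d i a = 0) :
    ∃ q : ℚ, a = algebraMap ℚ K q := by
  have hev : ∀ p : MvPolynomial (Fin 3) ℚ, aeval x p = algebraMap _ K p := by
    intro p
    have : aeval x = Algebra.algHom ℚ (MvPolynomial (Fin 3) ℚ) K := by
      apply MvPolynomial.algHom_ext
      intro j
      rw [aeval_X, hx]; rfl
    exact DFunLike.congr_fun this p
  have hdp : ∀ i p, d i (algebraMap (MvPolynomial (Fin 3) ℚ) K p) =
      algebraMap (MvPolynomial (Fin 3) ℚ) K (pderiv i p) := by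
    intro i p
    rw [← hev, aux_chain, ← hev]
    simp [hd]
  obtain ⟨p, q, hrel, hpq⟩ :=
    IsFractionRing.exists_reduced_fraction (A := MvPolynomial (Fin 3) ℚ) a
  have hq0 : (q : MvPolynomial (Fin 3) ℚ) ≠ 0 := nonZeroDivisors.coe_ne_zero q
  have hinj : Function.Injective (algebraMap (MvPolynomial (Fin 3) ℚ) K) :=
    IsFractionRing.injective _ _
  have hqF : algebraMap _ K (q : MvPolynomial (Fin 3) ℚ) ≠ 0 := by
    rw [Ne, map_eq_zero_iff _ hinj]; exact hq0
  have hpa : algebraMap _ K p = a * algebraMap _ K (q : MvPolynomial (Fin 3) ℚ) := by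
    rw [← hpq, IsLocalization.mk'_spec]
  have hpd : ∀ i, algebraMap _ K (pderiv i p) =
      a * algebraMap _ K (pderiv i (q : MvPolynomial (Fin 3) ℚ)) := by
    intro i
    rw [← hdp, ← hdp, hpa, Derivation.leibniz, ha i]; simp
  have hmul : ∀ i, (q : MvPolynomial (Fin 3) ℚ) * pderiv i p = p * pderiv i (q : MvPolynomial (Fin 3) ℚ) := by
    intro i
    apply hinj
    rw [map_mul, map_mul, hpd, hpa]; ring
  have hq : ∀ i, pderiv i (q : MvPolynomial (Fin 3) ℚ) = 0 := by
    intro i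
    have hdvd : (q : MvPolynomial (Fin 3) ℚ) ∣ pderiv i (q : MvPolynomial (Fin 3) ℚ) :=
      (hrel.symm).dvd_of_dvd_mul_left ⟨_, (hmul i).symm⟩
    by_contra hne
    obtain ⟨r, hr⟩ := hdvd
    have hlt := aux_totalDegree i _ hne
    have hr0 : r ≠ 0 := by rintro rfl; exact hne (by rw [hr, mul_zero])
    rw [hr, totalDegree_mul_of_isDomain hq0 hr0] at hlt
    omega
  have hp : ∀ i, pderiv i p = 0 := by
    intro i
    have := hmul i
    rw [hq, mul_zero] at this
    exact (mul_eq_zero.1 this).resolve_left hq0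
  have e1 := aux_const _ hp
  have e2 := aux_const _ hq
  refine ⟨coeff 0 p / coeff 0 (q : MvPolynomial (Fin 3) ℚ), ?_⟩
  have hC : ∀ c : ℚ, algebraMap (MvPolynomial (Fin 3) ℚ) K (C c) = algebraMap ℚ K c := by
    intro c
    rw [← hev, aeval_C]
  rw [map_div₀, ← hC, ← hC, ← e1, ← e2, hpa]
  field_simp

/-- numerator and denominator polynomials -/
lemma aux_lratio (p : MvPolynomial (Fin 2) ℚ) (mp np : ℕ) (q : MvPolynomial (Fin 2) ℚ)
    (mq nq : ℕ) (a b : Fld) (ha : a ≠ 0) (hb : b ≠ 0) :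
    lratio p mp np q mq nq a b =
      aeval ![a, b] (p * X 0 ^ mq * X 1 ^ nq) / aeval ![a, b] (q * X 0 ^ mp * X 1 ^ np) := by
  simp only [lratio, lv, map_mul, map_pow, aeval_X, Matrix.cons_val_zero, Matrix.cons_val_one]
  rcases eq_or_ne (aeval ![a, b] q) 0 with h | h
  · simp [h]
  · field_simp

/-- quotient rule -/
lemma aux_quot {K : Type} [Field K] [Algebra ℚ K] (d : Der K) (N D : MvPolynomial (Fin 2) ℚ) (u v : K)
    (hD : aeval ![u, v] D ≠ 0) :
    d (aeval ![u, v] N / aeval ![u, v] D) =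
      (aeval ![u, v] (D * pderiv 0 N - N * pderiv 0 D) * d u +
       aeval ![u, v] (D * pderiv 1 N - N * pderiv 1 D) * d v) / (aeval ![u, v] D) ^ 2 := by
  rw [Derivation.leibniz_div, aux_chain2, aux_chain2]
  simp only [map_sub, map_mul, smul_eq_mul]
  field_simp
  ring

lemma aux_main {K : Type} [Field K] [Algebra ℚ K] (x : Fin 3 → K) (N D bN bD cN cD : MvPolynomial (Fin 2) ℚ) (d : Fin 3 → Der K)
    (hd : ∀ i j, d i (x j) = if j = i then 1 else 0)
    (hconst : ∀ a, (∀ i, d i a = 0) → ∃ q : ℚ, a = algebraMap ℚ K q)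
    (a b c : K)
    (ha : a = aeval ![x 1, x 2] N / aeval ![x 1, x 2] D)
    (hb : b = aeval ![x 0, x 2] bN / aeval ![x 0, x 2] bD)
    (hc : c = aeval ![x 0, x 1] cN / aeval ![x 0, x 1] cD)
    (ha0 : a ≠ 0) (hb0 : b ≠ 0) (hc0 : c ≠ 0)
    (h1 : a = aeval ![(x 1)⁻¹ * b, x 2] N / aeval ![(x 1)⁻¹ * b, x 2] D)
    (h3 : a = aeval ![x 1, (x 2)⁻¹ * c] N / aeval ![x 1, (x 2)⁻¹ * c] D)
    (hncA : ¬∃ q : ℚ, a = algebraMap ℚ K q)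
    (hncB : ¬∃ q : ℚ, b = algebraMap ℚ K q)
    (hncC : ¬∃ q : ℚ, c = algebraMap ℚ K q) :
    bD * pderiv 0 bN - bN * pderiv 0 bD = 0 ∧ cD * pderiv 0 cN - cN * pderiv 0 cD = 0 := by
  have hX : ∀ i, x i ≠ 0 := by
    intro i h
    have := hd i i
    rw [h] at this
    simp at this
  have hb1 : d 1 b = 0 := by
    rw [hb, aux_quot _ _ _ _ _ (fun h => hb0 (by rw [hb, h, div_zero]))]
    simp [hd]
  have hc2 : d 2 c = 0 := by
    rw [hc, aux_quot _ _ _ _ _ (fun h => hc0 (by rw [hc, h, div_zero]))]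
    simp [hd]
  have ha0' : d 0 a = 0 := by
    rw [ha, aux_quot _ _ _ _ _ (fun h => ha0 (by rw [ha, h, div_zero]))]
    simp [hd]
  have hinv : ∀ i j w, j ≠ i → d i ((x j)⁻¹ * w) = (x j)⁻¹ * d i w := by
    intro i j w hij
    rw [Derivation.leibniz, Derivation.leibniz_inv, hd, if_neg hij]
    simp
  have hself : ∀ i w, d i w = 0 → w ≠ 0 → d i ((x i)⁻¹ * w) ≠ 0 := by
    intro i w hw hw0
    rw [Derivation.leibniz, Derivation.leibniz_inv, hd, hw]
    simp [hX i, hw0]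
  -- independence
  have hI1 := fun p => aux_indep (d 1) (d 2) ((x 1)⁻¹ * b) (x 2) (hself 1 b hb1 hb0)
    (by simp [hd]) (by simp [hd]) _ p le_rfl
  have hI3 := fun p => aux_indep' (d 1) (d 2) (x 1) ((x 2)⁻¹ * c) (hself 2 c hc2 hc0)
    (by simp [hd]) (by simp [hd]) p
  have hDne : D ≠ 0 := by rintro rfl; exact ha0 (by rw [ha, map_zero, div_zero])
  set G0 := D * pderiv 0 N - N * pderiv 0 D with hG0
  set G1 := D * pderiv 1 N - N * pderiv 1 D with hG1
  have q0 : ∀ i, d i a = (aeval ![x 1, x 2] G0 * d i (x 1) +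
       aeval ![x 1, x 2] G1 * d i (x 2)) / (aeval ![x 1, x 2] D) ^ 2 := by
    intro i
    conv_lhs => rw [ha]
    exact aux_quot _ _ _ _ _ (fun h => ha0 (by rw [ha, h, div_zero]))
  have q1 : ∀ i, d i a = (aeval ![(x 1)⁻¹ * b, x 2] G0 * d i ((x 1)⁻¹ * b) +
       aeval ![(x 1)⁻¹ * b, x 2] G1 * d i (x 2)) / (aeval ![(x 1)⁻¹ * b, x 2] D) ^ 2 := by
    intro i
    conv_lhs => rw [h1]
    exact aux_quot _ _ _ _ _ (fun h => hDne (hI1 _ h))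
  have q3 : ∀ i, d i a = (aeval ![x 1, (x 2)⁻¹ * c] G0 * d i (x 1) +
       aeval ![x 1, (x 2)⁻¹ * c] G1 * d i ((x 2)⁻¹ * c)) /
        (aeval ![x 1, (x 2)⁻¹ * c] D) ^ 2 := by
    intro i
    conv_lhs => rw [h3]
    exact aux_quot _ _ _ _ _ (fun h => hDne (hI3 _ h))
  have hnot : ¬ (G0 = 0 ∧ G1 = 0) := by
    rintro ⟨e0, e1⟩
    exact hncA (hconst a (fun i => by rw [q0, e0, e1]; simp))
  -- if d i a = 0 and the extra term vanishes, b resp. c is killed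
  have kb : ∀ i, i ≠ 1 → d i a = 0 → G0 ≠ 0 → (G1 = 0 ∨ i = 0) → d i b = 0 := by
    intro i hi hia hG hor
    have h := q1 i
    have hz : aeval ![(x 1)⁻¹ * b, x 2] G1 * d i (x 2) = 0 := by
      rcases hor with h | h
      · simp [h]
      · simp [h, hd]
    rw [hia, hz, add_zero, hinv _ _ _ hi.symm] at h
    have hne1 : aeval ![(x 1)⁻¹ * b, x 2] D ≠ 0 := fun h => hDne (hI1 _ h)
    have hne2 : aeval ![(x 1)⁻¹ * b, x 2] G0 ≠ 0 := fun h => hG (hI1 _ h)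
    have := hX 1
    have h' := (div_eq_zero_iff.1 h.symm).resolve_right (pow_ne_zero 2 hne1)
    exact (mul_eq_zero.1 ((mul_eq_zero.1 h').resolve_left hne2)).resolve_left (inv_ne_zero this)
  have kc : ∀ i, i ≠ 2 → d i a = 0 → G1 ≠ 0 → (G0 = 0 ∨ i = 0) → d i c = 0 := by
    intro i hi hia hG hor
    have h := q3 i
    have hz : aeval ![x 1, (x 2)⁻¹ * c] G0 * d i (x 1) = 0 := by
      rcases hor with h | h
      · simp [h]
      · simp [h, hd]
    rw [hia, hz, zero_add, hinv _ _ _ hi.symm] at h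
    have hne1 : aeval ![x 1, (x 2)⁻¹ * c] D ≠ 0 := fun h => hDne (hI3 _ h)
    have hne2 : aeval ![x 1, (x 2)⁻¹ * c] G1 ≠ 0 := fun h => hG (hI3 _ h)
    have := hX 2
    have h' := (div_eq_zero_iff.1 h.symm).resolve_right (pow_ne_zero 2 hne1)
    exact (mul_eq_zero.1 ((mul_eq_zero.1 h').resolve_left hne2)).resolve_left (inv_ne_zero this)
  have hG0ne : G0 ≠ 0 := by
    intro e0
    have e1 : G1 ≠ 0 := fun e1 => hnot ⟨e0, e1⟩
    refine hncC (hconst c fun i => ?_)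
    have ha1 : d 1 a = 0 := by rw [q0, e0]; simp [hd]
    fin_cases i
    · exact kc 0 (by decide) ha0' e1 (Or.inl e0)
    · exact kc 1 (by decide) ha1 e1 (Or.inl e0)
    · exact hc2
  have hG1ne : G1 ≠ 0 := by
    intro e1
    refine hncB (hconst b fun i => ?_)
    have ha2 : d 2 a = 0 := by rw [q0, e1]; simp [hd]
    fin_cases i
    · exact kb 0 (by decide) ha0' hG0ne (Or.inl e1)
    · exact hb1
    · exact kb 2 (by decide) ha2 hG0ne (Or.inl e1)
  have hb' := kb 0 (by decide) ha0' hG0ne (Or.inr rfl)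
  have hc' := kc 0 (by decide) ha0' hG1ne (Or.inr rfl)
  constructor
  · have hne : aeval ![x 0, x 2] bD ≠ 0 := fun h => hb0 (by rw [hb, h, div_zero])
    rw [hb, aux_quot _ _ _ _ _ hne] at hb'
    refine aux_indep (d 0) (d 2) (x 0) (x 2) (by simp [hd]) (by simp [hd]) (by simp [hd]) _ _
      le_rfl ?_
    simpa [hd, hne, -map_sub, -map_mul] using hb'
  · have hne : aeval ![x 0, x 1] cD ≠ 0 := fun h => hc0 (by rw [hc, h, div_zero])
    rw [hc, aux_quot _ _ _ _ _ hne] at hc'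
    refine aux_indep (d 0) (d 1) (x 0) (x 1) (by simp [hd]) (by simp [hd]) (by simp [hd]) _ _
      le_rfl ?_
    simpa [hd, hne, -map_sub, -map_mul] using hc'

/-- Let `P(x,y,z) = x⁻¹A₋ + A₀ + xA₊ = y⁻¹B₋ + B₀ + yB₊ = z⁻¹C₋ + C₀ + zC₊` with all six
coefficient Laurent polynomials nonzero, suppose `φ_x∘φ_y = φ_y∘φ_x` and
`φ_x∘φ_z = φ_z∘φ_x` (the four substitution-invariance identities below), and suppose none
of `A₋/A₊`, `B₋/B₊`, `C₋/C₊` is constant. Then `∂/∂x (B₋/B₊) = 0` and `∂/∂x (C₋/C₊) = 0`: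
the vanishing of the `x`-derivative of the ratio `B₋/B₊ = (bM·x^{bPx}z^{bPz})/(bP·x^{bMx}z^{bMz})`
is expressed by the vanishing of the numerator `q·∂p - p·∂q` of the quotient rule, and
similarly for `C₋/C₊`. -/
theorem stmt12
    (aM aP a0 bM bP b0 cM cP c0 : MvPolynomial (Fin 2) ℚ)
    (aMy aMz aPy aPz a0y a0z bMx bMz bPx bPz b0x b0z cMx cMy cPx cPy c0x c0y : ℕ)
    (P : Fld)
    (hA : P = (Xv 0)⁻¹ * lv aM aMy aMz (Xv 1) (Xv 2) + lv a0 a0y a0z (Xv 1) (Xv 2)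
            + Xv 0 * lv aP aPy aPz (Xv 1) (Xv 2))
    (hB : P = (Xv 1)⁻¹ * lv bM bMx bMz (Xv 0) (Xv 2) + lv b0 b0x b0z (Xv 0) (Xv 2)
            + Xv 1 * lv bP bPx bPz (Xv 0) (Xv 2))
    (hC : P = (Xv 2)⁻¹ * lv cM cMx cMy (Xv 0) (Xv 1) + lv c0 c0x c0y (Xv 0) (Xv 1)
            + Xv 2 * lv cP cPx cPy (Xv 0) (Xv 1))
    (hAM : lv aM aMy aMz (Xv 1) (Xv 2) ≠ 0) (hAP : lv aP aPy aPz (Xv 1) (Xv 2) ≠ 0)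
    (hBM : lv bM bMx bMz (Xv 0) (Xv 2) ≠ 0) (hBP : lv bP bPx bPz (Xv 0) (Xv 2) ≠ 0)
    (hCM : lv cM cMx cMy (Xv 0) (Xv 1) ≠ 0) (hCP : lv cP cPx cPy (Xv 0) (Xv 1) ≠ 0)
    (hcom1 : lratio aM aMy aMz aP aPy aPz (Xv 1) (Xv 2) =
      lratio aM aMy aMz aP aPy aPz
        ((Xv 1)⁻¹ * lratio bM bMx bMz bP bPx bPz (Xv 0) (Xv 2)) (Xv 2))
    (hcom2 : lratio bM bMx bMz bP bPx bPz (Xv 0) (Xv 2) =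
      lratio bM bMx bMz bP bPx bPz
        ((Xv 0)⁻¹ * lratio aM aMy aMz aP aPy aPz (Xv 1) (Xv 2)) (Xv 2))
    (hcom3 : lratio aM aMy aMz aP aPy aPz (Xv 1) (Xv 2) =
      lratio aM aMy aMz aP aPy aPz (Xv 1)
        ((Xv 2)⁻¹ * lratio cM cMx cMy cP cPx cPy (Xv 0) (Xv 1)))
    (hcom4 : lratio cM cMx cMy cP cPx cPy (Xv 0) (Xv 1) =
      lratio cM cMx cMy cP cPx cPy
        ((Xv 0)⁻¹ * lratio aM aMy aMz aP aPy aPz (Xv 1) (Xv 2)) (Xv 1))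
    (hncA : ¬∃ q : ℚ, lratio aM aMy aMz aP aPy aPz (Xv 1) (Xv 2) = algebraMap ℚ Fld q)
    (hncB : ¬∃ q : ℚ, lratio bM bMx bMz bP bPx bPz (Xv 0) (Xv 2) = algebraMap ℚ Fld q)
    (hncC : ¬∃ q : ℚ, lratio cM cMx cMy cP cPx cPy (Xv 0) (Xv 1) = algebraMap ℚ Fld q) :
    ((bP * X 0 ^ bMx * X 1 ^ bMz) * pderiv 0 (bM * X 0 ^ bPx * X 1 ^ bPz)
      - (bM * X 0 ^ bPx * X 1 ^ bPz) * pderiv 0 (bP * X 0 ^ bMx * X 1 ^ bMz) = 0) ∧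
    ((cP * X 0 ^ cMx * X 1 ^ cMy) * pderiv 0 (cM * X 0 ^ cPx * X 1 ^ cPy)
      - (cM * X 0 ^ cPx * X 1 ^ cPy) * pderiv 0 (cP * X 0 ^ cMx * X 1 ^ cMy) = 0) := by
  have : @IsScalarTower ℚ (MvPolynomial (Fin 3) ℚ) Fld Algebra.toSMul Algebra.toSMul
      Algebra.toSMul :=
    IsScalarTower.of_algebraMap_eq' (Subsingleton.elim _ _)
  choose d hd using aux_deriv Xv (fun _ => rfl)
  have hX : ∀ i, Xv i ≠ 0 := by
    intro i h
    have := hd i i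
    rw [h] at this
    simp at this
  have ha0 : lratio aM aMy aMz aP aPy aPz (Xv 1) (Xv 2) ≠ 0 := div_ne_zero hAM hAP
  have hb0 : lratio bM bMx bMz bP bPx bPz (Xv 0) (Xv 2) ≠ 0 := div_ne_zero hBM hBP
  have hc0 : lratio cM cMx cMy cP cPx cPy (Xv 0) (Xv 1) ≠ 0 := div_ne_zero hCM hCP
  exact aux_main Xv (aM * X 0 ^ aPy * X 1 ^ aPz) (aP * X 0 ^ aMy * X 1 ^ aMz) _ _ _ _ d hd (aux_constK Xv (fun _ => rfl) d hd)
    _ _ _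
    (aux_lratio _ _ _ _ _ _ _ _ (hX 1) (hX 2))
    (aux_lratio _ _ _ _ _ _ _ _ (hX 0) (hX 2))
    (aux_lratio _ _ _ _ _ _ _ _ (hX 0) (hX 1))
    ha0 hb0 hc0
    (hcom1.trans (aux_lratio _ _ _ _ _ _ _ _ (mul_ne_zero (inv_ne_zero (hX 1)) hb0) (hX 2)))
    (hcom3.trans (aux_lratio _ _ _ _ _ _ _ _ (hX 1) (mul_ne_zero (inv_ne_zero (hX 2)) hc0)))
    hncA hncB hncC
end
end
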